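/- Let G be a connected bipartite finite simple graph on vertex set V = {v_1,...,v_n} with n ≥ 2 and bipartition (V_1, V_2). Then the linear span of the edge cone R+A of G (equivalently, the affine hull of R+A) is exactly the hyperplane {x ∈ R^n : ∑_{v_i ∈ V_1} x_i = ∑_{v_i ∈ V_2} x_i}; in particular the edge cone has dimension n - 1. -/

import Mathlib

open Finset

/-- The edge vector `e_i + e_j` associated to an edge `{i, j}`. -/
def edgeVector {V : Type*} [DecidableEq V] (i j : V) : V → ℝ :=
  fun k => (if k = i then 1 else 0) + (if k = j then 1 else 0)

/-- The edge cone of a graph `G`: all nonnegative real linear combinations of the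
edge vectors of `G`. -/
def edgeCone {V : Type*} [Fintype V] [DecidableEq V] (G : SimpleGraph V) :
    Set (V → ℝ) :=
  { x | ∃ c : V → V → ℝ, (∀ i j, 0 ≤ c i j) ∧ (∀ i j, ¬ G.Adj i j → c i j = 0) ∧
        x = ∑ i, ∑ j, c i j • edgeVector i j }

/-- The neighbor set `N(A)`: vertices adjacent to at least one vertex of `A`. -/
def nbr {V : Type*} [Fintype V] [DecidableEq V] (G : SimpleGraph V)
    [DecidableRel G.Adj] (A : Finset V) : Finset V :=
  Finset.univ.filter fun v => ∃ a ∈ A, G.Adj v a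

/-- `A` is an independent set of vertices of `G`. -/
def IsIndep {V : Type*} (G : SimpleGraph V) (A : Finset V) : Prop :=
  ∀ a ∈ A, ∀ b ∈ A, ¬ G.Adj a b

/-- `F` is a face of the cone `Q`: `F = Q ∩ {x | ⟪x, a⟫ = 0}` for some `a` with
`Q ⊆ {x | ⟪x, a⟫ ≤ 0}`. -/
def IsFace {V : Type*} [Fintype V] (Q F : Set (V → ℝ)) : Prop :=
  ∃ a : V → ℝ, (∀ x ∈ Q, ∑ i, x i * a i ≤ 0) ∧ F = Q ∩ {x | ∑ i, x i * a i = 0}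

/-- `F` is a facet of the cone `Q`: a face whose linear span has dimension one less
than the dimension of the linear span of `Q`. -/
def IsFacet {V : Type*} [Fintype V] (Q F : Set (V → ℝ)) : Prop :=
  IsFace Q F ∧
    Module.finrank ℝ (Submodule.span ℝ F) = Module.finrank ℝ (Submodule.span ℝ Q) - 1

/-!
Every edge vector lies in the kernel of the functional `φ x = ∑ i ∈ V₁, x i - ∑ i ∈ V₂, x i`.
Conversely, let `f` be a linear map vanishing on the edge vectors. Then `f e_u = -f e_v` along each
edge, so for connected `G` there is a single `m` with `f e_u = m` on `V₁` and `f e_u = -m` on `V₂`,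
that is, `f x = φ x • m`. Taking for `f` the quotient map by the span of the edge vectors shows
that this span contains `ker φ`.
-/

section Connectivity

variable {V : Type*} {G : SimpleGraph V}

theorem eq_of_reachable_of_adj_imp_eq {α : Type*} {w : V → α}
    (hw : ∀ u v, G.Adj u v → w u = w v) {u v : V} (huv : G.Reachable u v) : w u = w v := by
  obtain ⟨p⟩ := huv
  induction p with
  | nil => rfl
  | cons h _ ih => exact (hw _ _ h).trans ih

theorem exists_eq_and_eq_neg_of_adj_add_eq_zero {M : Type*} [AddGroup M] {A B : Set V}
    (hG : G.Preconnected) (hAB : G.IsBipartiteWith A B) {w : V → M}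
    (hw : ∀ u v, G.Adj u v → w u + w v = 0) :
    ∃ m, (∀ u ∈ A, w u = m) ∧ ∀ u ∈ B, w u = -m := by
  classical
  rcases isEmpty_or_nonempty V with _ | ⟨⟨r⟩⟩
  · exact ⟨0, fun u => isEmptyElim u, fun u => isEmptyElim u⟩
  have notMem_left {u : V} (hu : u ∈ B) : u ∉ A := Set.disjoint_right.mp hAB.disjoint hu
  let signed : V → M := fun u => if u ∈ A then w u else -w u
  have signed_left {u : V} (hu : u ∈ A) : signed u = w u := if_pos hu
  have signed_right {u : V} (hu : u ∈ B) : signed u = -w u := if_neg (notMem_left hu)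
  have signed_adj (u v : V) (huv : G.Adj u v) : signed u = signed v := by
    rcases hAB.mem_of_adj huv with ⟨hu, hv⟩ | ⟨hu, hv⟩
    · rw [signed_left hu, signed_right hv, eq_neg_of_add_eq_zero_left (hw u v huv)]
    · rw [signed_right hu, signed_left hv, neg_eq_of_add_eq_zero_right (hw u v huv)]
  have signed_const (u : V) : signed u = signed r :=
    eq_of_reachable_of_adj_imp_eq signed_adj (hG u r)
  refine ⟨signed r, fun u hu => ?_, fun u hu => ?_⟩
  · rw [← signed_const u, signed_left hu]
  · rw [← signed_const u, signed_right hu, neg_neg]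

end Connectivity

section BipartitionForm

variable {V R : Type*} [Ring R]

/-- The functional `x ↦ ∑ i ∈ A, x i - ∑ i ∈ B, x i` on `V → R`. For the two parts `A`, `B` of a
bipartite graph, its kernel is the hyperplane containing the edge vectors. -/
def bipartitionForm (R : Type*) [Ring R] (A B : Finset V) : (V → R) →ₗ[R] R :=
  ∑ i ∈ A, LinearMap.proj i - ∑ i ∈ B, LinearMap.proj i

theorem bipartitionForm_apply (A B : Finset V) (x : V → R) :
    bipartitionForm R A B x = ∑ i ∈ A, x i - ∑ i ∈ B, x i := by
  simp [bipartitionForm]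

theorem mem_ker_bipartitionForm {A B : Finset V} {x : V → R} :
    x ∈ (bipartitionForm R A B).ker ↔ ∑ i ∈ A, x i = ∑ i ∈ B, x i := by
  rw [LinearMap.mem_ker, bipartitionForm_apply, sub_eq_zero]

theorem bipartitionForm_single_one [DecidableEq V] (A B : Finset V) (u : V) :
    bipartitionForm R A B (Pi.single u 1) =
      (if u ∈ A then 1 else 0) - (if u ∈ B then 1 else 0) := by
  simp [bipartitionForm_apply]

theorem bipartitionForm_ne_zero [Nontrivial R] {A B : Finset V} (hAB : A ≠ B) :
    bipartitionForm R A B ≠ 0 := by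
  classical
  contrapose! hAB with hzero
  ext u
  have hu : (if u ∈ A then (1 : R) else 0) = if u ∈ B then 1 else 0 := by
    rw [← sub_eq_zero, ← bipartitionForm_single_one, hzero, LinearMap.zero_apply]
  by_cases huA : u ∈ A <;> by_cases huB : u ∈ B <;> simp [huA, huB] at hu ⊢

theorem finrank_ker_bipartitionForm_add_one {K : Type*} [Field K] [Fintype V] {A B : Finset V}
    (hAB : A ≠ B) :
    Module.finrank K (bipartitionForm K A B).ker + 1 = Fintype.card V := by
  rw [Module.Dual.finrank_ker_add_one_of_ne_zero (bipartitionForm_ne_zero hAB),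
    Module.finrank_fintype_fun_eq_card]

theorem bipartitionForm_single_add_single [DecidableEq V] {G : SimpleGraph V} {A B : Finset V}
    (hAB : G.IsBipartiteWith A B) {u v : V} (huv : G.Adj u v) :
    bipartitionForm R A B (Pi.single u 1 + Pi.single v 1) = 0 := by
  have hdisj : Disjoint A B := Finset.disjoint_coe.mp hAB.disjoint
  rw [map_add, bipartitionForm_single_one, bipartitionForm_single_one]
  rcases hAB.mem_of_adj huv with ⟨hu, hv⟩ | ⟨hu, hv⟩
  · simp [Finset.mem_coe.mp hu, Finset.mem_coe.mp hv, Finset.disjoint_left.mp hdisj hu,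
      Finset.disjoint_right.mp hdisj hv]
  · simp [Finset.mem_coe.mp hu, Finset.mem_coe.mp hv, Finset.disjoint_left.mp hdisj hv,
      Finset.disjoint_right.mp hdisj hu]

theorem exists_eq_bipartitionForm_smul [Fintype V] [DecidableEq V] {G : SimpleGraph V}
    {A B : Finset V} {M : Type*} [AddCommGroup M] [Module R M] (hG : G.Preconnected)
    (hAB : G.IsBipartiteWith A B) (hcover : A ∪ B = Finset.univ) {f : (V → R) →ₗ[R] M}
    (hf : ∀ u v, G.Adj u v → f (Pi.single u 1 + Pi.single v 1) = 0) :
    ∃ m, ∀ x, f x = bipartitionForm R A B x • m := by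
  obtain ⟨m, hA, hB⟩ := exists_eq_and_eq_neg_of_adj_add_eq_zero hG hAB
    (w := fun u => f (Pi.single u 1)) fun u v huv => by rw [← map_add, hf u v huv]
  refine ⟨m, fun x => ?_⟩
  calc f x = ∑ i, x i • f (Pi.single i 1) := by
        conv_lhs => rw [pi_eq_sum_univ' x, map_sum]
        simp only [map_smul]
    _ = ∑ i ∈ A, x i • f (Pi.single i 1) + ∑ i ∈ B, x i • f (Pi.single i 1) := by
        rw [← hcover, Finset.sum_union (Finset.disjoint_coe.mp hAB.disjoint)]
    _ = ∑ i ∈ A, x i • m + ∑ i ∈ B, x i • -m :=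
        congrArg₂ _ (Finset.sum_congr rfl fun i hi => by rw [hA i hi])
          (Finset.sum_congr rfl fun i hi => by rw [hB i hi])
    _ = bipartitionForm R A B x • m := by
        rw [bipartitionForm_apply, sub_smul, Finset.sum_smul, Finset.sum_smul, sub_eq_add_neg,
          ← Finset.sum_neg_distrib]
        simp only [smul_neg]

end BipartitionForm

section EdgeModule

variable {V R : Type*} [DecidableEq V] [Ring R] {G : SimpleGraph V}

/-- The `R`-submodule of `V → R` spanned by the vectors `e_u + e_v`, for `u` and `v` adjacent in
`G`. Over `ℝ` it is the linear span of the edge cone. -/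
def edgeModule (R : Type*) [Ring R] (G : SimpleGraph V) : Submodule R (V → R) :=
  Submodule.span R {x | ∃ u v, G.Adj u v ∧ x = Pi.single u 1 + Pi.single v 1}

theorem single_add_single_mem_edgeModule {u v : V} (huv : G.Adj u v) :
    Pi.single u 1 + Pi.single v 1 ∈ edgeModule R G :=
  Submodule.subset_span ⟨u, v, huv, rfl⟩

theorem edgeModule_le_iff {S : Submodule R (V → R)} :
    edgeModule R G ≤ S ↔ ∀ u v, G.Adj u v → Pi.single u 1 + Pi.single v 1 ∈ S := by
  rw [edgeModule, Submodule.span_le]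
  exact ⟨fun h u v huv => h ⟨u, v, huv, rfl⟩, by rintro h _ ⟨u, v, huv, rfl⟩; exact h u v huv⟩

theorem edgeModule_le_ker_bipartitionForm {A B : Finset V} (hAB : G.IsBipartiteWith A B) :
    edgeModule R G ≤ (bipartitionForm R A B).ker :=
  edgeModule_le_iff.mpr fun _ _ huv => bipartitionForm_single_add_single hAB huv

theorem edgeModule_eq_ker_bipartitionForm [Fintype V] {A B : Finset V} (hG : G.Preconnected)
    (hAB : G.IsBipartiteWith A B) (hcover : A ∪ B = Finset.univ) :
    edgeModule R G = (bipartitionForm R A B).ker := by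
  refine le_antisymm (edgeModule_le_ker_bipartitionForm hAB) fun x hx => ?_
  obtain ⟨m, hm⟩ := exists_eq_bipartitionForm_smul hG hAB hcover (f := (edgeModule R G).mkQ)
    fun u v huv => (Submodule.Quotient.mk_eq_zero _).mpr (single_add_single_mem_edgeModule huv)
  rw [← Submodule.Quotient.mk_eq_zero, ← Submodule.mkQ_apply, hm, LinearMap.mem_ker.mp hx,
    zero_smul]

end EdgeModule

section EdgeCone

variable {V : Type*} [DecidableEq V]

theorem edgeVector_eq_single_add_single (u v : V) :
    edgeVector u v = Pi.single u 1 + Pi.single v 1 := by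
  ext k
  simp only [edgeVector, Pi.add_apply, Pi.single_apply]

variable [Fintype V] {G : SimpleGraph V}

theorem edgeVector_mem_edgeCone {u v : V} (huv : G.Adj u v) : edgeVector u v ∈ edgeCone G := by
  refine ⟨fun i j => if i = u ∧ j = v then 1 else 0, fun i j => ?_, fun i j hij => ?_, ?_⟩
  · dsimp only
    positivity
  · exact if_neg fun ⟨hi, hj⟩ => hij (hi ▸ hj ▸ huv)
  · simp [ite_and]

theorem edgeCone_subset_edgeModule : edgeCone G ⊆ edgeModule ℝ G := by
  rintro _ ⟨c, -, hc, rfl⟩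
  refine Submodule.sum_mem _ fun i _ => Submodule.sum_mem _ fun j _ => ?_
  by_cases hij : G.Adj i j
  · rw [edgeVector_eq_single_add_single]
    exact Submodule.smul_mem _ _ (single_add_single_mem_edgeModule hij)
  · rw [hc i j hij, zero_smul]
    exact Submodule.zero_mem _

theorem span_edgeCone : Submodule.span ℝ (edgeCone G) = edgeModule ℝ G := by
  refine le_antisymm (Submodule.span_le.mpr edgeCone_subset_edgeModule)
    (edgeModule_le_iff.mpr fun u v huv => ?_)
  rw [← edgeVector_eq_single_add_single]
  exact Submodule.subset_span (edgeVector_mem_edgeCone huv)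

end EdgeCone

theorem stmt6_general {V : Type*} [Fintype V] [DecidableEq V] (G : SimpleGraph V)
    (hG : G.Connected) (V₁ V₂ : Finset V) (hbip : G.IsBipartiteWith V₁ V₂)
    (hunion : V₁ ∪ V₂ = Finset.univ) :
    (Submodule.span ℝ (edgeCone G) : Set (V → ℝ)) =
      {x : V → ℝ | ∑ i ∈ V₁, x i = ∑ i ∈ V₂, x i} ∧
    Module.finrank ℝ (Submodule.span ℝ (edgeCone G)) = Fintype.card V - 1 := by
  have := hG.nonempty
  have hne : V₁ ≠ V₂ := by
    rintro rfl
    have hempty : V₁ = ∅ := disjoint_self.mp (Finset.disjoint_coe.mp hbip.disjoint)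
    rw [hempty, Finset.union_empty] at hunion
    exact Finset.univ_nonempty.ne_empty hunion.symm
  rw [span_edgeCone, edgeModule_eq_ker_bipartitionForm hG.preconnected hbip hunion]
  exact ⟨Set.ext fun _ => mem_ker_bipartitionForm,
    Nat.eq_sub_of_add_eq (finrank_ker_bipartitionForm_add_one hne)⟩

/-- For a connected bipartite graph `G` on `n ≥ 2` vertices with bipartition `(V₁, V₂)`,
the linear span of the edge cone is exactly the hyperplane
`∑_{v_i ∈ V₁} x_i = ∑_{v_i ∈ V₂} x_i`; in particular the edge cone has dimension
`n - 1`. -/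
theorem stmt6 {n : ℕ} (G : SimpleGraph (Fin n)) (hn : 2 ≤ n) (hG : G.Connected)
    (V₁ V₂ : Finset (Fin n)) (hdisj : Disjoint V₁ V₂)
    (hunion : V₁ ∪ V₂ = Finset.univ)
    (hbip : ∀ i j, G.Adj i j → (i ∈ V₁ ∧ j ∈ V₂) ∨ (i ∈ V₂ ∧ j ∈ V₁)) :
    (Submodule.span ℝ (edgeCone G) : Set (Fin n → ℝ)) =
      {x : Fin n → ℝ | ∑ i ∈ V₁, x i = ∑ i ∈ V₂, x i} ∧
    Module.finrank ℝ (Submodule.span ℝ (edgeCone G)) = n - 1 := by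
  simpa using stmt6_general G hG V₁ V₂ ⟨by exact_mod_cast hdisj, hbip⟩ hunion
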